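/- arXiv:2202.09858 — 3 statements merged into one kernel-verified Lean document; each statement's English description precedes it below -/
import Mathlib

section
/- Let n ≥ 2 and let Γ be any strongly regular graph with parameters (v, k, λ, μ) = (2^{2n}, 2^{n−1}(2^n + 1), 2^{n−1}(2^{n−1} + 1), 2^{n−1}(2^{n−1} + 1)), with vertex set V. Set M = 2^{2n} and N = 2^{n−1}(2^n + 1). Then there exists a family φ : V → EuclideanSpace ℝ (Fin N) of M unit vectors that is equiangular and is a tight frame with frame constant M/N, i.e. Σ_{x ∈ V} ⟨ψ, φ x⟩² = (M/N)‖ψ‖² for all ψ. -/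
/-!
Put `q = 2^(n-1)`, so that `(v, k, λ, μ) = (4q², 2q² + q, q² + q, q² + q)`. Since `λ = μ`, the
adjacency matrix satisfies `A² = q²I + (q² + q)J`, and its eigenvalues are `k` (on the constants)
and `±q`. The projection onto the `(-q)`-eigenspace is `P = I/2 - A/(2q) + J/(4q)`
(`srg_projection_idem`). Its diagonal entries are all `(2q + 1)/(4q) = N/M`, so its rank is
`tr P = N`, and its off-diagonal entries are all `±1/(4q)`.

A symmetric idempotent of trace `N` is the Gram matrix of a Parseval frame of `ℝ^N`
(`exists_parseval_frame_of_projection`); rescaling that frame by `√(M/N)` makes its vectors unit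
vectors and gives the required equiangular tight frame.
-/

open scoped RealInnerProductSpace

/-- A symmetric idempotent matrix of trace `N` is the Gram matrix of a Parseval frame of `ℝ^N`:
the frame vectors are the columns `P e_x`, read in an orthonormal basis of the column space. -/
theorem exists_parseval_frame_of_projection {V : Type*} [Fintype V] [DecidableEq V]
    (P : Matrix V V ℝ) (hsymm : P.IsSymm) (hidem : P * P = P) (N : ℕ) (htr : P.trace = N) :
    ∃ b : V → EuclideanSpace ℝ (Fin N),
      (∀ x y, ⟪b x, b y⟫ = P x y) ∧ ∀ ψ, ∑ x, ⟪ψ, b x⟫ ^ 2 = ‖ψ‖ ^ 2 := by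
  set T : EuclideanSpace ℝ V →ₗ[ℝ] EuclideanSpace ℝ V := Matrix.toLpLin 2 2 P with hT
  have hTT : IsIdempotentElem T := by
    rw [IsIdempotentElem, hT, Module.End.mul_eq_comp, ← Matrix.toLpLin_mul_same, hidem]
  have hTs : T.IsSymmetric :=
    Matrix.isSymmetric_toEuclideanLin_iff.mpr (by simpa [Matrix.IsHermitian] using hsymm.eq)
  have hTT' : ∀ u, T (T u) = T u := fun u => LinearMap.congr_fun hTT u
  have hproj := LinearMap.IsIdempotentElem.isProj_range T hTT
  have hrank : Module.finrank ℝ (LinearMap.range T) = N := by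
    have h1 := hproj.trace
    have h2 : LinearMap.trace ℝ _ T = P.trace := by
      rw [hT, Matrix.toLpLin_eq_toLin, Matrix.trace_toLin_eq]
    rw [h2, htr] at h1
    exact_mod_cast h1.symm
  let B := (stdOrthonormalBasis ℝ (LinearMap.range T)).reindex (finCongr hrank)
  let e : V → EuclideanSpace ℝ V := fun x => EuclideanSpace.single x 1
  refine ⟨fun x => B.repr ⟨T (e x), LinearMap.mem_range_self T _⟩, fun x y => ?_, fun ψ => ?_⟩
  · rw [LinearIsometryEquiv.inner_map_map, Submodule.coe_inner]
    dsimp only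
    rw [hTs, hTT']
    simp [e, hT, EuclideanSpace.inner_single_left, Matrix.toLpLin_apply]
  · obtain ⟨⟨u, hu⟩, rfl⟩ := B.repr.surjective ψ
    have hTu : T u = u := hproj.map_id u hu
    have key : ∀ x, ⟪B.repr ⟨u, hu⟩, B.repr ⟨T (e x), LinearMap.mem_range_self T _⟩⟫ = u x := by
      intro x
      rw [LinearIsometryEquiv.inner_map_map, Submodule.coe_inner]
      dsimp only
      rw [← hTs, hTu]
      simp [e, EuclideanSpace.inner_single_right]
    simp_rw [key]
    rw [LinearIsometryEquiv.norm_map, Submodule.coe_norm, EuclideanSpace.real_norm_sq_eq]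

/-- The hypotheses are the relations between the adjacency matrix `A` and the all-ones matrix `J`
of the graph, for `q = 2^(n-1)`; the matrix shown to be idempotent is then the projection onto the
`(-q)`-eigenspace of `A`. -/
theorem srg_projection_idem {V : Type*} [Fintype V] [DecidableEq V] (A J : Matrix V V ℝ) (q : ℝ)
    (hq : q ≠ 0) (hAA : A * A = (q ^ 2) • (1 : Matrix V V ℝ) + (q ^ 2 + q) • J)
    (hAJ : A * J = (2 * q ^ 2 + q) • J) (hJA : J * A = (2 * q ^ 2 + q) • J)
    (hJJ : J * J = (4 * q ^ 2) • J) :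
    ((1 / 2 : ℝ) • (1 : Matrix V V ℝ) - (1 / (2 * q)) • A + (1 / (4 * q)) • J) *
      ((1 / 2 : ℝ) • (1 : Matrix V V ℝ) - (1 / (2 * q)) • A + (1 / (4 * q)) • J) =
      (1 / 2 : ℝ) • (1 : Matrix V V ℝ) - (1 / (2 * q)) • A + (1 / (4 * q)) • J := by
  simp only [add_mul, mul_add, sub_mul, mul_sub, smul_mul_assoc, mul_smul_comm, hAA, hAJ, hJA,
    hJJ, one_mul, mul_one]
  match_scalars <;> field_simp <;> ring

/-- Every strongly regular graph with the parameters of the complement of `VO⁻_{2n}(2)` (`n ≥ 2`) yields a real equiangular tight frame of `M = 2^{2n}` unit vectors in `ℝ^N`, `N = 2^{n-1}(2^n + 1)`, with frame constant `M/N`. -/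
theorem etf_of_srg_VOminusCompl (n : ℕ) (hn : 2 ≤ n) {V : Type*} [Fintype V]
    (G : SimpleGraph V) [DecidableRel G.Adj]
    (h : G.IsSRGWith (2 ^ (2 * n)) (2 ^ (n - 1) * (2 ^ n + 1)) (2 ^ (n - 1) * (2 ^ (n - 1) + 1)) (2 ^ (n - 1) * (2 ^ (n - 1) + 1))) :
    ∃ φ : V → EuclideanSpace ℝ (Fin (2 ^ (n - 1) * (2 ^ n + 1))),
      (∀ x : V, ‖φ x‖ = 1) ∧
      (∃ α : ℝ, ∀ x y : V, x ≠ y → |⟪φ x, φ y⟫| = α) ∧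
      (∀ ψ : EuclideanSpace ℝ (Fin (2 ^ (n - 1) * (2 ^ n + 1))),
        ∑ x : V, ⟪ψ, φ x⟫ ^ 2 = (((2 ^ (2 * n) : ℕ) : ℝ) / ((2 ^ (n - 1) * (2 ^ n + 1) : ℕ) : ℝ)) * ‖ψ‖ ^ 2) := by
  classical
  obtain ⟨m, rfl⟩ : ∃ m, n = m + 1 := ⟨n - 1, by omega⟩
  simp only [Nat.add_sub_cancel] at h ⊢
  set q : ℝ := 2 ^ m with hqdef
  have hq : 0 < q := by positivity
  have hN : ((2 ^ m * (2 ^ (m + 1) + 1) : ℕ) : ℝ) = 2 * q ^ 2 + q := by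
    push_cast; rw [hqdef]; ring
  have hM : ((2 ^ (2 * (m + 1)) : ℕ) : ℝ) = 4 * q ^ 2 := by
    push_cast; rw [hqdef]; ring
  have hμ : ((2 ^ m * (2 ^ m + 1) : ℕ) : ℝ) = q ^ 2 + q := by
    push_cast; rw [hqdef]; ring
  have hcard : (Fintype.card V : ℝ) = 4 * q ^ 2 := by rw [h.card, hM]
  let A := G.adjMatrix ℝ
  let J : Matrix V V ℝ := Matrix.of 1
  have hC : Gᶜ.adjMatrix ℝ = J - 1 - A := by
    have := G.one_add_adjMatrix_add_compl_adjMatrix_eq_of_one ℝ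
    rw [G.compl_adjMatrix_eq_adjMatrix_compl ℝ] at this
    simp only [J, A, ← this]; abel
  have hAA : A * A = (q ^ 2) • (1 : Matrix V V ℝ) + (q ^ 2 + q) • J := by
    have := h.matrix_eq (α := ℝ)
    rw [pow_two, hC] at this
    simp only [← Nat.cast_smul_eq_nsmul ℝ, hN, hμ] at this
    rw [this]
    match_scalars <;> ring
  have hAJ : A * J = (2 * q ^ 2 + q) • J := by
    ext x y
    simp [A, J, h.regular.degree_eq x, ← hN]
  have hJA : J * A = (2 * q ^ 2 + q) • J := by
    ext x y
    simp [A, J, h.regular.degree_eq y, ← hN]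
  have hJJ : J * J = (4 * q ^ 2) • J := by
    ext x y
    simp [J, Matrix.mul_apply, hcard]
  set P : Matrix V V ℝ :=
    (1 / 2 : ℝ) • (1 : Matrix V V ℝ) - (1 / (2 * q)) • A + (1 / (4 * q)) • J with hP
  have hPs : P.IsSymm := by
    have hA : A.transpose = A := G.transpose_adjMatrix
    have hJ : J.transpose = J := rfl
    simp [Matrix.IsSymm, hP, hA, hJ]
  have hPd : ∀ x, P x x = (2 * q + 1) / (4 * q) := by
    intro x
    simp [hP, A, J]
    field_simp
    ring
  have hPo : ∀ x y, x ≠ y → |P x y| = 1 / (4 * q) := by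
    intro x y hxy
    have hpos : 0 < 1 / (4 * q) := by positivity
    by_cases hadj : G.Adj x y
    · have : P x y = -(1 / (4 * q)) := by
        simp [hP, A, J, hxy, hadj]
        field_simp
        norm_num
      rw [this, abs_neg, abs_of_pos hpos]
    · have : P x y = 1 / (4 * q) := by
        simp [hP, A, J, hxy, hadj]
      rw [this, abs_of_pos hpos]
  have htr : P.trace = ((2 ^ m * (2 ^ (m + 1) + 1) : ℕ) : ℝ) := by
    rw [hN]
    simp only [Matrix.trace, Matrix.diag_apply, hPd, Finset.sum_const, Finset.card_univ,
      nsmul_eq_mul, hcard]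
    field_simp
  obtain ⟨b, hb, hbt⟩ := exists_parseval_frame_of_projection P hPs
    (srg_projection_idem A J q hq.ne' hAA hAJ hJA hJJ) _ htr
  -- The columns of `P` all have squared length `N / M`, so this factor normalises them.
  set c : ℝ := √(4 * q ^ 2 / (2 * q ^ 2 + q)) with hc
  have hc2 : c ^ 2 = 4 * q ^ 2 / (2 * q ^ 2 + q) := Real.sq_sqrt (by positivity)
  refine ⟨fun x => c • b x, fun x => ?_, ⟨c ^ 2 * (1 / (4 * q)), fun x y hxy => ?_⟩, fun ψ => ?_⟩
  · rw [← sq_eq_sq₀ (norm_nonneg _) zero_le_one, ← real_inner_self_eq_norm_sq,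
      real_inner_smul_left, real_inner_smul_right, hb, hPd, ← mul_assoc, ← pow_two, hc2]
    field_simp
  · rw [real_inner_smul_left, real_inner_smul_right, hb, ← mul_assoc, ← pow_two, abs_mul,
      hPo x y hxy, abs_of_nonneg (sq_nonneg c)]
  · simp_rw [real_inner_smul_right, mul_pow, ← Finset.mul_sum]
    rw [hbt, hc2, hM, hN]
end

section
/- Let Γ be any strongly regular graph with parameters (v, k, λ, μ) = (36, 21, 12, 12), with vertex set V. Then there exists a family φ : V → EuclideanSpace ℝ (Fin 21) of 36 unit vectors that is equiangular and is a tight frame with frame constant 36/21, i.e. Σ_{x ∈ V} ⟨ψ, φ x⟩² = (36/21)‖ψ‖² for all ψ. -/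
/-!
The adjacency matrix `A` satisfies `A² = 9 I + 12 J`, because `λ = μ = 12` and `k - μ = 9`, and
`A J = 21 J`. Hence on the complement of the all-ones vector `A` has the eigenvalues `±3`, and
`P = (7 I - A + Aᶜ) / 12` (with `Aᶜ = J - I - A`) is the orthogonal projection onto the `-3`
eigenspace. Its trace is `36 · 7/12 = 21`, so this eigenspace has dimension `21`. The vectors
`P e_x`, read in an orthonormal basis of the range of `P`, form a Parseval frame with Gram matrix
`P` (`exists_parseval_of_projection`). All diagonal entries of `P` are `7/12` and all others are
`±1/12`, so scaling by `√(12/7)` gives an equiangular tight frame of unit vectors with angle `1/7`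
and frame constant `12/7 = 36/21`.
-/

open scoped RealInnerProductSpace

/-- A real symmetric idempotent matrix of trace `n` is the Gram matrix of a Parseval frame in
`ℝⁿ`: the projections of the standard basis vectors onto its range, which has dimension `n`. -/
theorem exists_parseval_of_projection {V : Type*} [Fintype V] [DecidableEq V] (n : ℕ)
    (P : Matrix V V ℝ) (hsymm : P.transpose = P) (hidem : P * P = P) (htr : P.trace = n) :
    ∃ φ : V → EuclideanSpace ℝ (Fin n),
      (∀ x y, ⟪φ x, φ y⟫ = P x y) ∧ ∀ ψ, ∑ x, ⟪ψ, φ x⟫ ^ 2 = ‖ψ‖ ^ 2 := by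
  set T : EuclideanSpace ℝ V →ₗ[ℝ] EuclideanSpace ℝ V := Matrix.toEuclideanLin P with hT
  have hTT : ∀ v, T (T v) = T v := by
    intro v
    ext i
    simp [hT, Matrix.toLpLin_apply, Matrix.mulVec_mulVec, hidem]
  have hsa : ∀ v w, ⟪T v, w⟫ = ⟪v, T w⟫ := by
    have hP : P.IsHermitian := by
      rw [Matrix.IsHermitian, Matrix.conjTranspose_eq_transpose_of_trivial, hsymm]
    exact Matrix.isSymmetric_toEuclideanLin_iff.mpr hP
  have hproj : LinearMap.IsProj (LinearMap.range T) T :=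
    ⟨fun v => ⟨v, rfl⟩, by rintro _ ⟨v, rfl⟩; exact hTT v⟩
  have hdim : Module.finrank ℝ (LinearMap.range T) = n := by
    have h1 := hproj.trace
    have h2 : LinearMap.trace ℝ _ T = P.trace := by
      rw [hT, Matrix.toEuclideanLin, Matrix.toLpLin_eq_toLin, Matrix.trace_toLin_eq]
    rw [h2, htr] at h1
    exact_mod_cast h1.symm
  let b : OrthonormalBasis (Fin n) ℝ (LinearMap.range T) :=
    (stdOrthonormalBasis ℝ (LinearMap.range T)).reindex (finCongr hdim)
  let e : V → EuclideanSpace ℝ V := fun x => EuclideanSpace.single x 1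
  refine ⟨fun x => b.repr ⟨T (e x), e x, rfl⟩, fun x y => ?_, fun ψ => ?_⟩
  · rw [LinearIsometryEquiv.inner_map_map, Submodule.coe_inner]
    change ⟪T (e x), T (e y)⟫ = _
    rw [hsa, hTT, EuclideanSpace.inner_single_left]
    simp [hT, e, Matrix.toLpLin_apply]
  · obtain ⟨w, rfl⟩ := b.repr.surjective ψ
    have hw : T (w : EuclideanSpace ℝ V) = w := hproj.map_id _ w.2
    have key : ∀ x, ⟪b.repr w, b.repr ⟨T (e x), e x, rfl⟩⟫ = (w : EuclideanSpace ℝ V) x := by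
      intro x
      rw [LinearIsometryEquiv.inner_map_map, Submodule.coe_inner]
      change ⟪(w : EuclideanSpace ℝ V), T (e x)⟫ = _
      rw [← hsa, hw, EuclideanSpace.inner_single_right]
      simp
    simp_rw [key]
    rw [LinearIsometryEquiv.norm_map, Submodule.coe_norm, EuclideanSpace.real_norm_sq_eq]

/-- The projection onto the `-3` eigenspace of an SRG with parameters `(36, 21, 12, 12)`. -/
noncomputable def srgProj {V : Type*} [DecidableEq V] (G : SimpleGraph V)
    [DecidableRel G.Adj] : Matrix V V ℝ :=
  (1 / 12 : ℝ) • ((7 : ℝ) • 1 - G.adjMatrix ℝ + Gᶜ.adjMatrix ℝ)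

theorem srgProj_mul_self {V : Type*} [Fintype V] [DecidableEq V] (G : SimpleGraph V)
    [DecidableRel G.Adj] (h : G.IsSRGWith 36 21 12 12) :
    srgProj G * srgProj G = srgProj G := by
  set A := G.adjMatrix ℝ with hA
  set J : Matrix V V ℝ := Matrix.of fun _ _ => 1 with hJ
  have hC : Gᶜ.adjMatrix ℝ = J - 1 - A := by
    ext x y
    by_cases hxy : x = y
    · subst hxy
      simp [hA, hJ]
    · by_cases ha : G.Adj x y <;> simp [hA, hJ, hxy, ha]
  have hAA : A * A = (9 : ℝ) • (1 : Matrix V V ℝ) + (12 : ℝ) • J := by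
    have := h.matrix_eq (α := ℝ)
    rw [hC, ← hA, pow_two] at this
    rw [this]
    module
  have hAJ : A * J = (21 : ℝ) • J := by
    ext x y
    simp [hA, hJ, SimpleGraph.adjMatrix_mul_apply, h.regular.degree_eq x]
  have hJA : J * A = (21 : ℝ) • J := by
    ext x y
    simp [hA, hJ, SimpleGraph.mul_adjMatrix_apply, h.regular.degree_eq y]
  have hJJ : J * J = (36 : ℝ) • J := by
    ext x y
    simp [hJ, Matrix.mul_apply, h.card]
  have hP : srgProj G = (1 / 12 : ℝ) • ((6 : ℝ) • 1 - (2 : ℝ) • A + J) := by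
    rw [srgProj, hC]
    module
  rw [hP]
  simp only [smul_mul_assoc, mul_smul_comm, add_mul, sub_mul, mul_add, mul_sub, one_mul, mul_one,
    hAA, hAJ, hJA, hJJ]
  module

/-- Every strongly regular graph with parameters `(36, 21, 12, 12)` (e.g. the complement of the `G₂(2)` graph) yields a real equiangular tight frame of `36` unit vectors in `ℝ²¹` with frame constant `36/21`. -/
theorem etf_of_srg_G2Compl {V : Type*} [Fintype V]
    (G : SimpleGraph V) [DecidableRel G.Adj]
    (h : G.IsSRGWith (36) (21) (12) (12)) :
    ∃ φ : V → EuclideanSpace ℝ (Fin (21)),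
      (∀ x : V, ‖φ x‖ = 1) ∧
      (∃ α : ℝ, ∀ x y : V, x ≠ y → |⟪φ x, φ y⟫| = α) ∧
      (∀ ψ : EuclideanSpace ℝ (Fin (21)),
        ∑ x : V, ⟪ψ, φ x⟫ ^ 2 = (((36 : ℕ) : ℝ) / ((21 : ℕ) : ℝ)) * ‖ψ‖ ^ 2) := by
  classical
  have hdiag : ∀ x, srgProj G x x = 7 / 12 := by
    intro x
    simp [srgProj]
    norm_num
  have hoff : ∀ x y, x ≠ y → |srgProj G x y| = 1 / 12 := by
    intro x y hxy
    by_cases ha : G.Adj x y <;> simp [srgProj, hxy, ha]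
  obtain ⟨φ, hgram, htight⟩ := exists_parseval_of_projection 21 (srgProj G)
    (by simp [srgProj, Matrix.transpose_add, Matrix.transpose_sub])
    (srgProj_mul_self G h)
    (by simp [Matrix.trace, hdiag, h.card]; norm_num)
  have hc : √(12 / 7 : ℝ) * √(12 / 7 : ℝ) = 12 / 7 := Real.mul_self_sqrt (by norm_num)
  refine ⟨fun x => √(12 / 7 : ℝ) • φ x, fun x => ?_, ⟨1 / 7, fun x y hxy => ?_⟩, fun ψ => ?_⟩
  · have : ‖√(12 / 7 : ℝ) • φ x‖ ^ 2 = 1 := by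
      rw [← real_inner_self_eq_norm_sq, real_inner_smul_left, real_inner_smul_right, ← mul_assoc,
        hc, hgram, hdiag]
      norm_num
    exact (pow_eq_one_iff_of_nonneg (norm_nonneg _) two_ne_zero).mp this
  · rw [real_inner_smul_left, real_inner_smul_right, ← mul_assoc, hc, hgram, abs_mul,
      hoff x y hxy, abs_of_pos (by norm_num)]
    norm_num
  · simp_rw [real_inner_smul_right, mul_pow]
    rw [← Finset.mul_sum, htight, pow_two, hc]
    norm_num
end

section
/- Let Γ be any strongly regular graph with parameters (v, k, λ, μ) = (176, 105, 68, 54), with vertex set V. Then there exists a family φ : V → EuclideanSpace ℝ (Fin 154) of 176 unit vectors that is equiangular and is a tight frame with frame constant 176/154, i.e. Σ_{x ∈ V} ⟨ψ, φ x⟩² = (176/154)‖ψ‖² for all ψ. -/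
/-!
Let `A` be the adjacency matrix and `J` the all-ones matrix. The parameters give
`A² = 51 I + 14 A + 54 J` and `A J = J A = 105 J`, so `A` has eigenvalues `105`, `17` and `-3`.
The orthogonal projection onto the `(-3)`-eigenspace is `P = (17/20) I + (1/40) J - (1/20) A`
(`minusThreeProj`). It is symmetric and idempotent, and its trace is `176 · 7/8 = 154`; its diagonal
entries are `7/8` and its off-diagonal entries are `±1/40`.

A symmetric idempotent real matrix of trace `n` is the Gram matrix of a Parseval frame of `ℝⁿ`
(`exists_parseval_of_proj`): project the standard basis to the range of the matrix, which has
dimension `n`, and identify this range isometrically with `ℝⁿ`. Scaling the frame obtained from `P`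
by `√(8/7)` makes the vectors unit vectors, with mutual inner products `±1/35` and frame constant
`8/7 = 176/154`.
-/

open scoped RealInnerProductSpace

/-- A symmetric idempotent real matrix of trace `n` is the Gram matrix of a Parseval frame
of `ℝⁿ`. -/
theorem exists_parseval_of_proj {V : Type*} [Fintype V] [DecidableEq V] (P : Matrix V V ℝ)
    (hs : P.IsSymm) (hi : P * P = P) {n : ℕ} (ht : P.trace = n) :
    ∃ φ : V → EuclideanSpace ℝ (Fin n),
      (∀ x y, ⟪φ x, φ y⟫ = P x y) ∧ ∀ ψ, ∑ x, ⟪ψ, φ x⟫ ^ 2 = ‖ψ‖ ^ 2 := by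
  set T : EuclideanSpace ℝ V →ₗ[ℝ] EuclideanSpace ℝ V := P.toEuclideanLin with hT
  have hsym : T.IsSymmetric :=
    Matrix.isSymmetric_toEuclideanLin_iff.2 (by simpa [Matrix.IsHermitian] using hs.eq)
  have hTT : ∀ v, T (T v) = T v := by
    intro v
    ext i
    simp [hT, Matrix.toLpLin_apply, Matrix.mulVec_mulVec, hi]
  have hproj : LinearMap.IsProj (LinearMap.range T) T :=
    ⟨fun x => LinearMap.mem_range_self T x, by rintro _ ⟨v, rfl⟩; exact hTT v⟩
  have htr : LinearMap.trace ℝ _ T = P.trace := by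
    rw [hT, Matrix.toEuclideanLin, Matrix.toLpLin_eq_toLin, Matrix.trace_toLin_eq]
  have hrank : Module.finrank ℝ (LinearMap.range T) = n := by
    have := hproj.trace
    rw [htr, ht] at this
    exact_mod_cast this.symm
  let e : LinearMap.range T ≃ₗᵢ[ℝ] EuclideanSpace ℝ (Fin n) :=
    ((stdOrthonormalBasis ℝ (LinearMap.range T)).reindex (finCongr hrank)).repr
  refine ⟨fun x => e ⟨T (EuclideanSpace.single x 1), LinearMap.mem_range_self T _⟩, ?_, ?_⟩
  · intro x y
    rw [e.inner_map_map, Submodule.coe_inner, hsym, hTT]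
    simp [hT, Matrix.toLpLin_apply, EuclideanSpace.inner_single_left]
  · intro ψ
    obtain ⟨w, rfl⟩ := e.surjective ψ
    -- Elements of the range are fixed by `T`, so these inner products are coordinates of `w`.
    have hw : ∀ x, ⟪e w, e ⟨T (EuclideanSpace.single x 1), LinearMap.mem_range_self T _⟩⟫
        = (w : EuclideanSpace ℝ V) x := by
      intro x
      rw [e.inner_map_map, Submodule.coe_inner, ← hsym, hproj.map_id _ w.2]
      simp [EuclideanSpace.inner_single_right]
    simp only [hw, e.norm_map, Submodule.coe_norm, EuclideanSpace.real_norm_sq_eq]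

/-- The matrix `(17/20) I + (1/40) J - (1/20) A`, where `A` is the adjacency matrix of `G` and `J`
the all-ones matrix. For an SRG with parameters `(176, 105, 68, 54)` this is the orthogonal
projection onto the eigenspace of `A` for the eigenvalue `-3`. -/
noncomputable def minusThreeProj {V : Type*} [DecidableEq V]
    (G : SimpleGraph V) [DecidableRel G.Adj] : Matrix V V ℝ :=
  (17 / 20 : ℝ) • 1 + (1 / 40 : ℝ) • Matrix.of 1 - (1 / 20 : ℝ) • G.adjMatrix ℝ

theorem minusThreeProj_mul_self {V : Type*} [Fintype V] [DecidableEq V]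
    (G : SimpleGraph V) [DecidableRel G.Adj] (h : G.IsSRGWith 176 105 68 54) :
    minusThreeProj G * minusThreeProj G = minusThreeProj G := by
  set A := G.adjMatrix ℝ with hA
  set J : Matrix V V ℝ := Matrix.of 1 with hJ
  have hJJ : J * J = (176 : ℝ) • J := by
    ext i j
    simp [hJ, Matrix.mul_apply, h.card]
  have hAJ : A * J = (105 : ℝ) • J := by
    ext i j
    simp [hA, hJ, h.regular.degree_eq]
  have hJA : J * A = (105 : ℝ) • J := by
    ext i j
    simp [hA, hJ, h.regular.degree_eq]
  have hAA : A * A = (51 : ℝ) • 1 + (14 : ℝ) • A + (54 : ℝ) • J := by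
    have h1 := h.matrix_eq (α := ℝ)
    rw [sq] at h1
    rw [h1]
    ext i j
    simp only [Matrix.add_apply, Matrix.smul_apply]
    by_cases hij : i = j
    · subst hij
      simp [hA, hJ]; norm_num
    · by_cases hadj : G.Adj i j <;> simp [hA, hJ, hij, hadj] <;> norm_num
  change ((17 / 20 : ℝ) • 1 + (1 / 40 : ℝ) • J - (1 / 20 : ℝ) • A) *
    ((17 / 20 : ℝ) • 1 + (1 / 40 : ℝ) • J - (1 / 20 : ℝ) • A) =
    (17 / 20 : ℝ) • 1 + (1 / 40 : ℝ) • J - (1 / 20 : ℝ) • A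
  simp only [mul_add, add_mul, mul_sub, sub_mul, smul_mul_assoc, mul_smul_comm, one_mul, mul_one,
    hJJ, hAJ, hJA, hAA]
  module

/-- Every strongly regular graph with parameters `(176, 105, 68, 54)` (e.g. the complement of the `M₂₂` graph) yields a real equiangular tight frame of `176` unit vectors in `ℝ¹⁵⁴` with frame constant `176/154`. -/
theorem etf_of_srg_M22Compl {V : Type*} [Fintype V]
    (G : SimpleGraph V) [DecidableRel G.Adj]
    (h : G.IsSRGWith (176) (105) (68) (54)) :
    ∃ φ : V → EuclideanSpace ℝ (Fin (154)),
      (∀ x : V, ‖φ x‖ = 1) ∧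
      (∃ α : ℝ, ∀ x y : V, x ≠ y → |⟪φ x, φ y⟫| = α) ∧
      (∀ ψ : EuclideanSpace ℝ (Fin (154)),
        ∑ x : V, ⟪ψ, φ x⟫ ^ 2 = (((176 : ℕ) : ℝ) / ((154 : ℕ) : ℝ)) * ‖ψ‖ ^ 2) := by
  classical
  have hdiag : ∀ x, minusThreeProj G x x = 7 / 8 := by
    intro x
    simp [minusThreeProj]; norm_num
  have hsymm : (minusThreeProj G).IsSymm := by
    ext i j
    simp [minusThreeProj, Matrix.one_apply, G.adj_comm, eq_comm]
  have htrace : (minusThreeProj G).trace = (154 : ℕ) := by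
    simp [Matrix.trace, hdiag, h.card]; norm_num
  obtain ⟨φ, hgram, htight⟩ :=
    exists_parseval_of_proj _ hsymm (minusThreeProj_mul_self G h) htrace
  have hsq : √(8 / 7 : ℝ) * √(8 / 7 : ℝ) = 8 / 7 := Real.mul_self_sqrt (by norm_num)
  have hinner : ∀ x y, ⟪√(8 / 7 : ℝ) • φ x, √(8 / 7 : ℝ) • φ y⟫
      = 8 / 7 * minusThreeProj G x y := by
    intro x y
    rw [real_inner_smul_left, real_inner_smul_right, hgram, ← mul_assoc, hsq]
  refine ⟨fun x => √(8 / 7 : ℝ) • φ x, ?_, ⟨1 / 35, ?_⟩, ?_⟩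
  · intro x
    rw [norm_eq_sqrt_real_inner, hinner, hdiag]
    norm_num
  · intro x y hxy
    rw [hinner]
    by_cases hadj : G.Adj x y <;> simp [minusThreeProj, hxy, hadj] <;> norm_num [abs_of_neg]
  · intro ψ
    simp only [real_inner_smul_right, mul_pow, ← Finset.mul_sum, htight]
    rw [sq √(8 / 7 : ℝ), hsq]
    norm_num
end
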